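/- Let Ω ⊆ ℝ² be open and simply connected, let α : Ω → ℝ² be smooth, and let S ⊆ Ω × ℝ² be its graph. Then α is the derivative of a smooth solution u : Ω → ℝ of det(Hess u) = 1 (up to sign of the determinant condition det(Dα) = ±1 with det(Dα)=1) if and only if S is a J-holomorphic curve, where J is the complex structure on ℝ²⊕ℝ² given in block form by J((x,y)) = (J₀y, J₀x). Equivalently, S is J-holomorphic if and only if the 1-form α is closed and det(Dα) = 1. -/

import Mathlib

/-- The standard complex structure `J₀` on `ℝ²`, rotation by `π/2`. -/
def J0 : ℝ × ℝ → ℝ × ℝ := fun v => (-v.2, v.1)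

open Set Topology Bundle

/-- The real numbers with the discrete topology, the fibre of the bundle of primitives. -/
structure DReal where
  val : ℝ

instance : TopologicalSpace DReal := ⊥
instance : DiscreteTopology DReal := ⟨rfl⟩

/-- Two primitives of the same form on a convex open set differ by a constant. -/
theorem exists_const_diff {E : Type*} [NormedAddCommGroup E] [NormedSpace ℝ E]
    {ω : E → E →L[ℝ] ℝ} {s : Set E} (hs : Convex ℝ s) {f g : E → ℝ}
    (hf : ∀ a ∈ s, HasFDerivAt f (ω a) a) (hg : ∀ a ∈ s, HasFDerivAt g (ω a) a) :
    ∃ c, ∀ a ∈ s, f a - g a = c := by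
  rcases s.eq_empty_or_nonempty with rfl | ⟨b, hb⟩
  · exact ⟨0, by simp⟩
  · refine ⟨f b - g b, fun a ha => ?_⟩
    have h : ∀ x ∈ s, HasFDerivWithinAt (fun x => f x - g x) (0 : E →L[ℝ] ℝ) s x := by
      intro x hx
      have := ((hf x hx).sub (hg x hx)).hasFDerivWithinAt (s := s)
      rwa [sub_self] at this
    have := hs.norm_image_sub_le_of_norm_hasFDerivWithin_le (C := 0) h (by simp) hb ha
    rw [zero_mul, norm_le_zero_iff, sub_eq_zero] at this
    exact this

/-- Poincaré lemma for 1-forms on a simply connected open set. -/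
theorem exists_primitive_of_simplyConnected {E : Type*} [NormedAddCommGroup E] [NormedSpace ℝ E]
    {Ω : Set E} (hΩ : IsOpen Ω) (hsc : SimplyConnectedSpace Ω)
    {ω : E → E →L[ℝ] ℝ} (hω : DifferentiableOn ℝ ω Ω)
    (hdω : ∀ a ∈ Ω, ∀ x y, fderiv ℝ ω a x y = fderiv ℝ ω a y x) :
    ∃ u : E → ℝ, ∀ a ∈ Ω, HasFDerivAt u (ω a) a := by
  classical
  have hloc : ∀ p : Ω, ∃ (r : ℝ) (f : E → ℝ), 0 < r ∧ Metric.ball (p : E) r ⊆ Ω ∧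
      ∀ a ∈ Metric.ball (p : E) r, HasFDerivAt f (ω a) a := by
    intro p
    obtain ⟨r, hr, hsub⟩ := Metric.isOpen_iff.1 hΩ p p.2
    obtain ⟨f, hf⟩ := (convex_ball (p : E) r).exists_forall_hasFDerivAt_of_fderiv_symmetric
      Metric.isOpen_ball (hω.mono hsub) (fun a ha => hdω a (hsub ha))
    exact ⟨r, f, hr, hsub, hf⟩
  choose r f hr hsub hf using hloc
  let Z : FiberBundleCore Ω Ω DReal :=
    { baseSet := fun i => Subtype.val ⁻¹' Metric.ball (i : E) (r i)
      isOpen_baseSet := fun i => Metric.isOpen_ball.preimage continuous_subtype_val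
      indexAt := id
      mem_baseSet_at := fun x => Metric.mem_ball_self (hr x)
      coordChange := fun i j x v => ⟨v.val + (f i x - f j x)⟩
      coordChange_self := by intro i x _ v; simp
      continuousOn_coordChange := by
        intro i j
        obtain ⟨c, hc⟩ := exists_const_diff (ω := ω) (f := f i) (g := f j)
          ((convex_ball (i : E) (r i)).inter (convex_ball (j : E) (r j)))
          (fun a ha => hf i a ha.1) (fun a ha => hf j a ha.2)
        have h1 : Continuous (fun v : DReal => (⟨v.val + c⟩ : DReal)) :=
          continuous_of_discreteTopology
        refine (h1.comp continuous_snd).continuousOn.congr ?_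
        rintro ⟨x, v⟩ ⟨hx, -⟩
        simp only [Function.comp]
        rw [hc x hx]
      coordChange_comp := by
        intro i j k x _ v
        simp only [DReal.mk.injEq]
        ring }
  have cov : IsCoveringMap (π DReal Z.Fiber) := FiberBundle.isCoveringMap
  have : LocallyPathConnectedSpace Ω := hΩ.locallyPathConnectedSpace
  obtain ⟨a₀⟩ : Nonempty Ω := inferInstance
  obtain ⟨s, ⟨-, hs⟩, -⟩ := cov.existsUnique_continuousMap_lifts (ContinuousMap.id Ω) a₀
    (⟨a₀, (⟨0⟩ : DReal)⟩ : TotalSpace DReal Z.Fiber) rfl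
  have hsproj : ∀ x : Ω, (s x).proj = x := fun x => congrFun hs x
  -- the value of the section
  let val : TotalSpace DReal Z.Fiber → ℝ := fun e =>
    f e.proj e.proj + (show DReal from e.snd).val
  let u : E → ℝ := fun x => if h : x ∈ Ω then val (s ⟨x, h⟩) else 0
  refine ⟨u, fun a ha => ?_⟩
  let i : Ω := ⟨a, ha⟩
  let g : Ω → DReal := fun x => (Z.localTriv i (s x)).2
  have hg : ContinuousAt g i := by
    have h1 : s i ∈ (Z.localTriv i).source := by
      rw [Trivialization.mem_source]
      change (s i).proj ∈ Z.baseSet i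
      rw [hsproj]
      exact Z.mem_baseSet_at i
    exact continuous_snd.continuousAt.comp
      (ContinuousAt.comp (f := s) ((Z.localTriv i).continuousAt h1) s.continuous.continuousAt)
  have hgc : ∀ᶠ x in 𝓝 i, g x = g i :=
    hg.eventually (by rw [nhds_discrete]; simp : ∀ᶠ y in 𝓝 (g i), y = g i)
  have hval : ∀ x : Ω, val (s x) = f i x + (g x).val := by
    intro x
    have e : (g x).val = (show DReal from (s x).snd).val
        + (f (s x).proj (s x).proj - f i (s x).proj) := rfl
    rw [e, ← congrArg Subtype.val (hsproj x), hsproj x]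
    simp only [val]
    rw [hsproj x]
    ring
  have hgcu : ∀ᶠ x in 𝓝 a, u x = f i x + (g i).val := by
    have : ∀ᶠ x in 𝓝 a, ∀ h : x ∈ Ω, g ⟨x, h⟩ = g i := by
      rw [nhds_subtype_eq_comap, Filter.eventually_comap] at hgc
      filter_upwards [hgc] with x hx h
      exact hx ⟨x, h⟩ rfl
    filter_upwards [this, hΩ.mem_nhds ha] with x hx hxΩ
    simp only [u, dif_pos hxΩ]
    rw [hval, hx hxΩ]
  exact ((hf i a (Metric.mem_ball_self (hr i))).add_const _).congr_of_eventuallyEq hgcu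

/-- Pointwise linear algebra: the tangent plane is `J`-invariant iff symmetric with det 1. -/
theorem J_invariant_iff (A : ℝ × ℝ →L[ℝ] ℝ × ℝ) :
    (∀ v : ℝ × ℝ, A (J0 (A v)) = J0 v) ↔
      (A (1, 0)).2 = (A (0, 1)).1 ∧
      (A (1, 0)).1 * (A (0, 1)).2 - (A (0, 1)).1 * (A (1, 0)).2 = 1 := by
  have hA : ∀ x y : ℝ, A (x, y) =
      (x * (A (1, 0)).1 + y * (A (0, 1)).1, x * (A (1, 0)).2 + y * (A (0, 1)).2) := by
    intro x y
    have h : ((x, y) : ℝ × ℝ) = x • (1, 0) + y • (0, 1) := by simp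
    conv_lhs => rw [h, map_add, map_smul, map_smul]
    ext <;> simp
  generalize (A (1, 0)) = p at *
  generalize (A (0, 1)) = q at *
  obtain ⟨a, c⟩ := p
  obtain ⟨b, d⟩ := q
  simp only [J0] at *
  constructor
  · intro h
    have h1 := h (1, 0)
    have h2 := h (0, 1)
    rw [hA 1 0, hA] at h1
    rw [hA 0 1, hA] at h2
    simp only [Prod.mk.injEq] at h1 h2
    obtain ⟨h1, h3⟩ := h1
    obtain ⟨h2, h4⟩ := h2
    have hbc : c = b := by
      by_contra hne
      have hnz : b - c ≠ 0 := fun h => hne (by linarith)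
      have ha : a = 0 := by
        have : a * (b - c) = 0 := by linarith
        exact (mul_eq_zero.1 this).resolve_right hnz
      subst ha
      nlinarith [sq_nonneg c]
    subst hbc
    exact ⟨rfl, by linarith⟩
  · rintro ⟨rfl, h⟩ ⟨x, y⟩
    rw [hA x y, hA]
    ext
    · simp only; linear_combination (-y) * h
    · simp only; linear_combination x * h

/-- The covector with given components. -/
noncomputable def toForm : ℝ × ℝ →L[ℝ] (ℝ × ℝ →L[ℝ] ℝ) :=
  (ContinuousLinearMap.fst ℝ ℝ ℝ).smulRight (ContinuousLinearMap.fst ℝ ℝ ℝ) +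
    (ContinuousLinearMap.snd ℝ ℝ ℝ).smulRight (ContinuousLinearMap.snd ℝ ℝ ℝ)

theorem toForm_apply (a v : ℝ × ℝ) : toForm a v = a.1 * v.1 + a.2 * v.2 := by
  simp [toForm]

theorem toForm_of (l : ℝ × ℝ →L[ℝ] ℝ) : toForm (l (1, 0), l (0, 1)) = l := by
  ext <;> simp [toForm_apply]

theorem form_fderiv {Ω : Set (ℝ × ℝ)} (hΩ : IsOpen Ω)
    {α : ℝ × ℝ → ℝ × ℝ} (hα : ContDiffOn ℝ (⊤ : ℕ∞) α Ω) {p : ℝ × ℝ} (hp : p ∈ Ω) :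
    HasFDerivAt (fun q => toForm (α q)) (toForm.comp (fderiv ℝ α p)) p :=
  toForm.hasFDerivAt.comp p
    (((hα.differentiableOn (by simp)).differentiableAt (hΩ.mem_nhds hp)).hasFDerivAt)

/-- On a simply connected domain, closed is the same as being a gradient. -/
theorem closed_iff_exact (Ω : Set (ℝ × ℝ)) (hΩ : IsOpen Ω) (hsc : SimplyConnectedSpace Ω)
    (α : ℝ × ℝ → ℝ × ℝ) (hα : ContDiffOn ℝ (⊤ : ℕ∞) α Ω) :
    (∃ u : ℝ × ℝ → ℝ, ContDiffOn ℝ (⊤ : ℕ∞) u Ω ∧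
        (∀ p ∈ Ω, α p = (fderiv ℝ u p (1, 0), fderiv ℝ u p (0, 1)))) ↔
      (∀ p ∈ Ω, (fderiv ℝ α p (1, 0)).2 = (fderiv ℝ α p (0, 1)).1) := by
  constructor
  · rintro ⟨u, hu, h⟩ p hp
    have hev : ∀ᶠ q in 𝓝 p, HasFDerivAt u (toForm (α q)) q := by
      filter_upwards [hΩ.mem_nhds hp] with q hq
      rw [h q hq, toForm_of]
      exact ((hu.differentiableOn (by simp)).differentiableAt (hΩ.mem_nhds hq)).hasFDerivAt
    have := second_derivative_symmetric_of_eventually hev (form_fderiv hΩ hα hp) (1, 0) (0, 1)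
    simpa [toForm_apply] using this
  · intro h
    obtain ⟨u, hu⟩ := exists_primitive_of_simplyConnected (ω := fun q => toForm (α q)) hΩ hsc
      (fun p hp => (form_fderiv hΩ hα hp).differentiableAt.differentiableWithinAt)
      (by
        intro p hp x y
        rw [(form_fderiv hΩ hα hp).fderiv]
        have key : ∀ z : ℝ × ℝ, fderiv ℝ α p z
            = z.1 • fderiv ℝ α p (1, 0) + z.2 • fderiv ℝ α p (0, 1) := by
          intro z
          rw [← map_smul, ← map_smul, ← map_add]
          simp
        have hc := h p hp
        simp only [ContinuousLinearMap.comp_apply, toForm_apply]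
        rw [key x, key y]
        simp only [Prod.fst_add, Prod.snd_add, Prod.smul_fst, Prod.smul_snd, smul_eq_mul]
        rw [hc]
        ring)
    refine ⟨u, ?_, fun p hp => ?_⟩
    · refine (contDiffOn_infty_iff_fderiv_of_isOpen hΩ).2
        ⟨fun p hp => (hu p hp).differentiableAt.differentiableWithinAt, ?_⟩
      exact (toForm.contDiff.comp_contDiffOn hα).congr fun p hp => (hu p hp).fderiv
    · rw [(hu p hp).fderiv]
      simp [toForm_apply]

theorem monge_ampere_eq_pseudoholomorphic
    (Ω : Set (ℝ × ℝ)) (hΩ : IsOpen Ω) (hsc : SimplyConnectedSpace Ω)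
    (α : ℝ × ℝ → ℝ × ℝ) (hα : ContDiffOn ℝ (⊤ : ℕ∞) α Ω) :
    -- α is the derivative of a smooth solution of det Hess u = 1 ...
    ((∃ u : ℝ × ℝ → ℝ, ContDiffOn ℝ (⊤ : ℕ∞) u Ω ∧
        (∀ p ∈ Ω, α p = (fderiv ℝ u p (1, 0), fderiv ℝ u p (0, 1))) ∧
        (∀ p ∈ Ω,
          (fderiv ℝ α p (1, 0)).1 * (fderiv ℝ α p (0, 1)).2 -
            (fderiv ℝ α p (0, 1)).1 * (fderiv ℝ α p (1, 0)).2 = 1)) ↔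
      -- ... iff the graph of α is a J-holomorphic curve, i.e. its tangent
      -- plane {(v, Dα v)} is invariant under J(x,y) = (J₀ y, J₀ x):
      (∀ p ∈ Ω, ∀ v : ℝ × ℝ, fderiv ℝ α p (J0 (fderiv ℝ α p v)) = J0 v)) ∧
    -- equivalently, J-holomorphicity holds iff α is closed and det Dα = 1:
    ((∀ p ∈ Ω, ∀ v : ℝ × ℝ, fderiv ℝ α p (J0 (fderiv ℝ α p v)) = J0 v) ↔
      (∀ p ∈ Ω, (fderiv ℝ α p (1, 0)).2 = (fderiv ℝ α p (0, 1)).1) ∧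
      (∀ p ∈ Ω,
        (fderiv ℝ α p (1, 0)).1 * (fderiv ℝ α p (0, 1)).2 -
          (fderiv ℝ α p (0, 1)).1 * (fderiv ℝ α p (1, 0)).2 = 1)) := by 
  have hJ : (∀ p ∈ Ω, ∀ v : ℝ × ℝ, fderiv ℝ α p (J0 (fderiv ℝ α p v)) = J0 v) ↔
      (∀ p ∈ Ω, (fderiv ℝ α p (1, 0)).2 = (fderiv ℝ α p (0, 1)).1) ∧
      (∀ p ∈ Ω,
        (fderiv ℝ α p (1, 0)).1 * (fderiv ℝ α p (0, 1)).2 -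
          (fderiv ℝ α p (0, 1)).1 * (fderiv ℝ α p (1, 0)).2 = 1) := by
    simp only [J_invariant_iff]
    exact ⟨fun h => ⟨fun p hp => (h p hp).1, fun p hp => (h p hp).2⟩,
      fun h p hp => ⟨h.1 p hp, h.2 p hp⟩⟩
  refine ⟨?_, hJ⟩
  rw [hJ, ← closed_iff_exact Ω hΩ hsc α hα]
  constructor
  · rintro ⟨u, h1, h2, h3⟩
    exact ⟨⟨u, h1, h2⟩, h3⟩
  · rintro ⟨⟨u, h1, h2⟩, h3⟩
    exact ⟨u, h1, h2, h3⟩
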